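/- Let n ≥ 1, T > 0, ε > 0, and let M be a real n×n matrix for which there exists λ > 0 with xᵀMx ≥ λ|x|² for all x ∈ ℝⁿ. Let F : [0,T] × ℝⁿ → ℝⁿ be continuous, bounded, and Lipschitz in its second argument uniformly in the first. Then there exists exactly one continuous function Φ : (0,T] → ℝⁿ which is differentiable on (0,T], satisfies the singular (Fuchsian) system t Φ'(t) + M Φ(t) = t^ε F(t, Φ(t)) for all t ∈ (0,T], and satisfies Φ(t) → 0 as t → 0⁺. -/

import Mathlib

open Filter Matrix

/-!
In the logarithmic time `s = log t` the singular system becomes the nonautonomous equation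
`y' = -A y + e^{εs} F(e^s, y)` on a half-line `s ≤ log T`, and the condition `Φ(t) → 0` becomes
`y(s) → 0` as `s → -∞`. When the semigroup `exp(-sA)`, `s ≥ 0`, is bounded by `C`, such solutions
are exactly the fixed points of the Duhamel operator
`y ↦ ∫_{-∞}^s exp(-(s-r)A) e^{εr} F(e^r, y(r)) dr`. The nonlinearity is Lipschitz with constant
`k(s) = O(e^{εs})`, integrable at `-∞`, so this operator halves distances in the sup norm weighted
by `exp(2C ∫_{-∞}^s k)`. Positivity of `M` makes the Euclidean norm nonincreasing along the linear
flow, so that its semigroup is bounded.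
-/

section FuchsianODE

open MeasureTheory Set Topology NormedSpace

theorem hasDerivAt_setIntegral_Iic {E : Type*} [NormedAddCommGroup E] [NormedSpace ℝ E]
    [CompleteSpace E] {g : ℝ → E} (hg : Continuous g)
    (hgi : ∀ s, IntegrableOn g (Iic s)) (s : ℝ) :
    HasDerivAt (fun s => ∫ r in Iic s, g r) (g s) s := by
  have split : (fun s => ∫ r in Iic s, g r) =
      fun s => (∫ r in Iic (0 : ℝ), g r) + ∫ r in (0 : ℝ)..s, g r := by
    funext s
    rw [← intervalIntegral.integral_Iic_sub_Iic (hgi 0) (hgi s), add_sub_cancel]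
  rw [split]
  exact (hg.integral_hasStrictDerivAt 0 s).hasDerivAt.const_add _

theorem exists_norm_le_of_continuousOn_of_tendsto_atBot {E : Type*}
    [SeminormedAddCommGroup E] {z : ℝ → E} {b : ℝ} {l : E}
    (hz : ContinuousOn z (Iic b)) (hlim : Tendsto z atBot (𝓝 l)) :
    ∃ c, ∀ s ≤ b, ‖z s‖ ≤ c := by
  obtain ⟨a, ha⟩ := eventually_atBot.1 (hlim.norm.eventually_le_const (lt_add_one ‖l‖))
  obtain ⟨c, hc⟩ := isCompact_Icc.exists_bound_of_continuousOn
    (hz.mono (Icc_subset_Iic_self : Icc a b ⊆ Iic b))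
  refine ⟨max (‖l‖ + 1) c, fun s hs => ?_⟩
  rcases le_total s a with hsa | has
  · exact (ha s hsa).trans (le_max_left _ _)
  · exact (hc s ⟨has, hs⟩).trans (le_max_right _ _)

section ExpWeight

/-- A nonnegative continuous rate which is integrable at `-∞`. In the logarithmic time of a Fuchsian
system it bounds the nonlinearity. -/
structure IsIntegrableRate (k : ℝ → ℝ) : Prop where
  nonneg : ∀ s, 0 ≤ k s
  continuous : Continuous k
  integrableOn : ∀ s, IntegrableOn k (Iic s)

/-- The weight `exp (∫_{-∞}^s k)`, which solves `W' = k W` with `W → 1` at `-∞`. -/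
noncomputable def expWeight (k : ℝ → ℝ) (s : ℝ) : ℝ := Real.exp (∫ r in Iic s, k r)

variable {k : ℝ → ℝ}

theorem expWeight_pos (k : ℝ → ℝ) (s : ℝ) : 0 < expWeight k s := Real.exp_pos _

theorem tendsto_expWeight_atBot (k : ℝ → ℝ) : Tendsto (expWeight k) atBot (𝓝 1) := by
  simpa only [Real.exp_zero, id] using! (tendsto_integral_Iic_zero (f := k) tendsto_id).rexp

theorem norm_expWeight_smul_le {E : Type*} [SeminormedAddCommGroup E] [NormedSpace ℝ E]
    (u : BoundedContinuousFunction ℝ E) (s : ℝ) :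
    ‖expWeight k s • u s‖ ≤ ‖u‖ * expWeight k s := by
  rw [norm_smul, Real.norm_of_nonneg (expWeight_pos k s).le, mul_comm]
  exact mul_le_mul_of_nonneg_right (u.norm_coe_le_norm s) (expWeight_pos k s).le

namespace IsIntegrableRate

theorem const_mul (hk : IsIntegrableRate k) {c : ℝ} (hc : 0 ≤ c) :
    IsIntegrableRate fun s => c * k s where
  nonneg s := mul_nonneg hc (hk.nonneg s)
  continuous := hk.continuous.const_mul c
  integrableOn s := (hk.integrableOn s).const_mul c

theorem one_le_expWeight (hk : IsIntegrableRate k) (s : ℝ) : 1 ≤ expWeight k s :=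
  Real.one_le_exp (integral_nonneg hk.nonneg)

theorem monotone_expWeight (hk : IsIntegrableRate k) : Monotone (expWeight k) := fun _ b hab =>
  Real.exp_le_exp.2 <| setIntegral_mono_set (hk.integrableOn b) (ae_of_all _ hk.nonneg)
    (Iic_subset_Iic.2 hab).eventuallyLE

theorem hasDerivAt_expWeight (hk : IsIntegrableRate k) (s : ℝ) :
    HasDerivAt (expWeight k) (k s * expWeight k s) s := by
  rw [mul_comm]
  exact (hasDerivAt_setIntegral_Iic hk.continuous hk.integrableOn s).exp

theorem continuous_expWeight (hk : IsIntegrableRate k) : Continuous (expWeight k) :=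
  continuous_iff_continuousAt.2 fun s => (hk.hasDerivAt_expWeight s).continuousAt

theorem integrableOn_mul_expWeight (hk : IsIntegrableRate k) {j : ℝ → ℝ} {s : ℝ}
    (hj : IntegrableOn j (Iic s)) : IntegrableOn (fun r => j r * expWeight k r) (Iic s) := by
  refine Integrable.mul_bdd (c := expWeight k s) hj
    hk.continuous_expWeight.aestronglyMeasurable ?_
  refine (ae_restrict_iff' measurableSet_Iic).2 (ae_of_all _ fun r hr => ?_)
  rw [Real.norm_of_nonneg (expWeight_pos k r).le]
  exact hk.monotone_expWeight hr

theorem setIntegral_Iic_mul_expWeight (hk : IsIntegrableRate k) (s : ℝ) :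
    ∫ r in Iic s, k r * expWeight k r = expWeight k s - 1 :=
  integral_Iic_of_hasDerivAt_of_tendsto' (fun r _ => hk.hasDerivAt_expWeight r)
    (hk.integrableOn_mul_expWeight (hk.integrableOn s)) (tendsto_expWeight_atBot k)

theorem exists_norm_le_mul_expWeight (hk : IsIntegrableRate k) {E : Type*}
    [SeminormedAddCommGroup E] {y : ℝ → E} {b : ℝ} {l : E} (hy : ContinuousOn y (Iic b))
    (hlim : Tendsto y atBot (𝓝 l)) : ∃ c, ∀ s ≤ b, ‖y s‖ ≤ c * expWeight k s := by
  obtain ⟨c, hc⟩ := exists_norm_le_of_continuousOn_of_tendsto_atBot hy hlim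
  exact ⟨c, fun s hs => (hc s hs).trans
    (le_mul_of_one_le_right ((norm_nonneg _).trans (hc s hs)) (hk.one_le_expWeight s))⟩

end IsIntegrableRate

end ExpWeight

section Duhamel

variable {E : Type*} [NormedAddCommGroup E] [NormedSpace ℝ E]

/-- The solution `∫_{-∞}^s exp ((s - r) A) (g r) dr` of `y' = A y + g` vanishing at `-∞`, given by
Duhamel's formula. -/
noncomputable def duhamel (A : E →L[ℝ] E) (g : ℝ → E) (s : ℝ) : E :=
  ∫ r in Iic s, exp ((s - r) • A) (g r)

variable {A : E →L[ℝ] E} {C : ℝ}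

theorem norm_exp_smul_apply_le (hC : ∀ t : ℝ, 0 ≤ t → ‖exp (t • A)‖ ≤ C) {t : ℝ} (ht : 0 ≤ t)
    (x : E) : ‖exp (t • A) x‖ ≤ C * ‖x‖ :=
  (exp (t • A)).le_of_opNorm_le (hC t ht) x

theorem nonneg_of_norm_exp_smul_le (hC : ∀ t : ℝ, 0 ≤ t → ‖exp (t • A)‖ ≤ C) : 0 ≤ C :=
  (norm_nonneg _).trans (hC 0 le_rfl)

theorem norm_duhamel_le (hC : ∀ t : ℝ, 0 ≤ t → ‖exp (t • A)‖ ≤ C) {g : ℝ → E} {k : ℝ → ℝ} {s : ℝ}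
    (hk : IntegrableOn k (Iic s)) (hgk : ∀ r ≤ s, ‖g r‖ ≤ k r) :
    ‖duhamel A g s‖ ≤ C * ∫ r in Iic s, k r := by
  rw [← integral_const_mul]
  refine norm_integral_le_of_norm_le (hk.const_mul C) ?_
  refine (ae_restrict_iff' measurableSet_Iic).2 (ae_of_all _ fun r (hr : r ≤ s) => ?_)
  exact (norm_exp_smul_apply_le hC (sub_nonneg.2 hr) _).trans
    (mul_le_mul_of_nonneg_left (hgk r hr) (nonneg_of_norm_exp_smul_le hC))

theorem tendsto_duhamel_atBot (hC : ∀ t : ℝ, 0 ≤ t → ‖exp (t • A)‖ ≤ C) {g : ℝ → E}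
    (hg : ∀ s, IntegrableOn g (Iic s)) : Tendsto (duhamel A g) atBot (𝓝 0) := by
  refine squeeze_zero_norm (fun s => norm_duhamel_le hC (hg s).norm fun r _ => le_rfl) ?_
  simpa only [mul_zero, id] using
    (tendsto_integral_Iic_zero (f := fun r => ‖g r‖) tendsto_id).const_mul C

/-- The weight for which the Duhamel operator of `y' = A y + f s y` is a `1/2`-contraction when
`‖exp (t A)‖ ≤ C` for `t ≥ 0` and `f s` is `k s`-Lipschitz. -/
noncomputable def duhamelWeight (C : ℝ) (k : ℝ → ℝ) : ℝ → ℝ := expWeight fun s => 2 * C * k s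

theorem norm_duhamel_le_duhamelWeight (hC : ∀ t : ℝ, 0 ≤ t → ‖exp (t • A)‖ ≤ C) {k : ℝ → ℝ}
    (hk : IsIntegrableRate k) {g : ℝ → E} {c s : ℝ} (hc : 0 ≤ c)
    (hg : ∀ r ≤ s, ‖g r‖ ≤ c * (k r * duhamelWeight C k r)) :
    ‖duhamel A g s‖ ≤ c / 2 * duhamelWeight C k s := by
  have rate : IsIntegrableRate fun s => 2 * C * k s :=
    hk.const_mul (mul_nonneg zero_le_two (nonneg_of_norm_exp_smul_le hC))
  have integrable : IntegrableOn (fun r => k r * duhamelWeight C k r) (Iic s) :=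
    rate.integrableOn_mul_expWeight (hk.integrableOn s)
  have weight_integral : 2 * C * ∫ r in Iic s, k r * duhamelWeight C k r =
      duhamelWeight C k s - 1 := by
    simp only [← integral_const_mul, ← mul_assoc]
    exact rate.setIntegral_Iic_mul_expWeight s
  calc ‖duhamel A g s‖ ≤ C * ∫ r in Iic s, c * (k r * duhamelWeight C k r) :=
        norm_duhamel_le hC (integrable.const_mul c) hg
    _ = c / 2 * (2 * C * ∫ r in Iic s, k r * duhamelWeight C k r) := by
        rw [integral_const_mul]; ring
    _ ≤ c / 2 * duhamelWeight C k s := by rw [weight_integral]; gcongr; linarith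

variable [CompleteSpace E]

theorem continuous_exp_smul (A : E →L[ℝ] E) : Continuous fun s : ℝ => exp (s • A) :=
  continuous_iff_continuousAt.2 fun s => (hasDerivAt_exp_smul_const A s).continuousAt

theorem exp_add_smul_apply (A : E →L[ℝ] E) (r s : ℝ) (x : E) :
    exp ((r + s) • A) x = exp (r • A) (exp (s • A) x) := by
  let : NormedAlgebra ℚ (E →L[ℝ] E) := NormedAlgebra.restrictScalars ℚ ℝ _
  rw [add_smul, exp_add_of_commute (((Commute.refl A).smul_left r).smul_right s),
    mul_apply_eq_comp]

theorem integrableOn_exp_smul_apply (hC : ∀ t : ℝ, 0 ≤ t → ‖exp (t • A)‖ ≤ C) {g : ℝ → E} {s : ℝ}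
    (hg : IntegrableOn g (Iic s)) : IntegrableOn (fun r => exp ((s - r) • A) (g r)) (Iic s) := by
  refine (hg.norm.const_mul C).mono' ?_ ?_
  · exact (isBoundedBilinearMap_apply (𝕜 := ℝ)).continuous.comp_aestronglyMeasurable
      (((continuous_exp_smul A).comp (by fun_prop : Continuous fun r => s - r)).aestronglyMeasurable
        |>.prodMk hg.aestronglyMeasurable)
  · refine (ae_restrict_iff' measurableSet_Iic).2 (ae_of_all _ fun r (hr : r ≤ s) => ?_)
    exact norm_exp_smul_apply_le hC (sub_nonneg.2 hr) _

theorem duhamel_sub (hC : ∀ t : ℝ, 0 ≤ t → ‖exp (t • A)‖ ≤ C) {g h : ℝ → E} {s : ℝ}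
    (hg : IntegrableOn g (Iic s)) (hh : IntegrableOn h (Iic s)) :
    duhamel A (fun r => g r - h r) s = duhamel A g s - duhamel A h s := by
  simp only [duhamel, map_sub]
  exact integral_sub (integrableOn_exp_smul_apply hC hg) (integrableOn_exp_smul_apply hC hh)

theorem hasDerivAt_duhamel (hC : ∀ t : ℝ, 0 ≤ t → ‖exp (t • A)‖ ≤ C) {g : ℝ → E}
    (hgc : Continuous g) (hg : ∀ s, IntegrableOn g (Iic s)) (s : ℝ) :
    HasDerivAt (duhamel A g) (A (duhamel A g s) + g s) s := by
  have shift (s r : ℝ) : exp (-r • A) (g r) = exp (-s • A) (exp ((s - r) • A) (g r)) := by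
    rw [← exp_add_smul_apply, show -s + (s - r) = -r by ring]
  have integrable (s : ℝ) : IntegrableOn (fun r => exp (-r • A) (g r)) (Iic s) := by
    simp only [shift s]
    exact (exp (-s • A)).integrable_comp (integrableOn_exp_smul_apply hC (hg s))
  have factor : duhamel A g = fun s => exp (s • A) (∫ r in Iic s, exp (-r • A) (g r)) := by
    funext s
    rw [← ContinuousLinearMap.integral_comp_comm _ (integrable s), duhamel]
    simp only [← exp_add_smul_apply, sub_eq_add_neg]
  have primitive := hasDerivAt_setIntegral_Iic
    (((continuous_exp_smul A).comp continuous_neg).clm_apply hgc) integrable s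
  have cancel : exp (s • A) (exp (-s • A) (g s)) = g s := by
    rw [← exp_add_smul_apply, add_neg_cancel, zero_smul, exp_zero, one_apply_eq_self]
  rw [factor]
  simpa only [Function.comp_apply, mul_apply_eq_comp, cancel] using
    (hasDerivAt_exp_smul_const' A s).clm_apply primitive

theorem eq_duhamel_of_hasDerivAt (hC : ∀ t : ℝ, 0 ≤ t → ‖exp (t • A)‖ ≤ C) {y g : ℝ → E} {s : ℝ}
    (hy : ∀ r ≤ s, HasDerivAt y (A (y r) + g r) r) (hlim : Tendsto y atBot (𝓝 0))
    (hg : IntegrableOn g (Iic s)) : y s = duhamel A g s := by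
  have deriv (r : ℝ) (hr : r ∈ Iic s) :
      HasDerivAt (fun r => exp ((s - r) • A) (y r)) (exp ((s - r) • A) (g r)) r := by
    have := ((hasDerivAt_exp_smul_const A (s - r)).scomp r
      ((hasDerivAt_id r).const_sub s)).clm_apply (hy r hr)
    simpa using this
  have lim : Tendsto (fun r => exp ((s - r) • A) (y r)) atBot (𝓝 0) := by
    refine squeeze_zero_norm' (a := fun r => C * ‖y r‖) ?_ (by simpa using hlim.norm.const_mul C)
    filter_upwards [eventually_le_atBot s] with r hr
    exact norm_exp_smul_apply_le hC (sub_nonneg.2 hr) _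
  have := integral_Iic_of_hasDerivAt_of_tendsto' deriv (integrableOn_exp_smul_apply hC hg) lim
  simpa [duhamel] using this.symm

end Duhamel

section HalfLineODE

/-- The condition under which `y' = A y + f s y` can be integrated from `s = -∞`: at time `s`, both
the Lipschitz constant of the field `f` and its size at `0` are bounded by an integrable rate. -/
structure HasIntegrableLipschitzBound {E : Type*} [NormedAddCommGroup E] (f : ℝ → E → E)
    (k : ℝ → ℝ) : Prop where
  continuous : Continuous fun p : ℝ × E => f p.1 p.2
  rate : IsIntegrableRate k
  norm_apply_zero_le : ∀ s, ‖f s 0‖ ≤ k s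
  norm_apply_sub_le : ∀ s x y, ‖f s x - f s y‖ ≤ k s * ‖x - y‖

namespace HasIntegrableLipschitzBound

variable {E : Type*} [NormedAddCommGroup E] {C : ℝ} {f : ℝ → E → E} {k : ℝ → ℝ}

theorem norm_le (hf : HasIntegrableLipschitzBound f k) (s : ℝ) (x : E) :
    ‖f s x‖ ≤ k s * (1 + ‖x‖) := by
  have := hf.norm_apply_sub_le s x 0
  rw [sub_zero] at this
  linarith [norm_le_norm_add_norm_sub' (f s x) (f s 0), hf.norm_apply_zero_le s]

theorem isIntegrableRate_weight (hf : HasIntegrableLipschitzBound f k) (hC : 0 ≤ C) :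
    IsIntegrableRate fun s => 2 * C * k s :=
  hf.rate.const_mul (mul_nonneg zero_le_two hC)

theorem norm_apply_le_of_norm_le (hf : HasIntegrableLipschitzBound f k) (hC : 0 ≤ C) {x : E}
    {c s : ℝ} (hx : ‖x‖ ≤ c * duhamelWeight C k s) :
    ‖f s x‖ ≤ (1 + c) * (k s * duhamelWeight C k s) :=
  calc ‖f s x‖ ≤ k s * (1 + ‖x‖) := hf.norm_le s x
    _ ≤ k s * (duhamelWeight C k s + c * duhamelWeight C k s) :=
        mul_le_mul_of_nonneg_left
          (add_le_add ((hf.isIntegrableRate_weight hC).one_le_expWeight s) hx) (hf.rate.nonneg s)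
    _ = (1 + c) * (k s * duhamelWeight C k s) := by ring

theorem integrableOn_comp (hf : HasIntegrableLipschitzBound f k) (hC : 0 ≤ C) {y : ℝ → E}
    {c s : ℝ} (hyc : ContinuousOn y (Iic s)) (hy : ∀ r ≤ s, ‖y r‖ ≤ c * duhamelWeight C k r) :
    IntegrableOn (fun r => f r (y r)) (Iic s) := by
  have bound_integrable := ((hf.isIntegrableRate_weight hC).integrableOn_mul_expWeight
    (hf.rate.integrableOn s)).const_mul (1 + c)
  refine bound_integrable.mono' ?_ ?_
  · exact (hf.continuous.comp_continuousOn (continuousOn_id.prodMk hyc)).aestronglyMeasurable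
      measurableSet_Iic
  · exact (ae_restrict_iff' measurableSet_Iic).2
      (ae_of_all _ fun r hr => hf.norm_apply_le_of_norm_le hC (hy r hr))

variable [NormedSpace ℝ E] [CompleteSpace E] {A : E →L[ℝ] E}

theorem norm_duhamel_sub_duhamel_le (hf : HasIntegrableLipschitzBound f k)
    (hC : ∀ t : ℝ, 0 ≤ t → ‖exp (t • A)‖ ≤ C) {y z : ℝ → E} {s a b c : ℝ}
    (hyc : ContinuousOn y (Iic s)) (hy : ∀ r ≤ s, ‖y r‖ ≤ a * duhamelWeight C k r)
    (hzc : ContinuousOn z (Iic s)) (hz : ∀ r ≤ s, ‖z r‖ ≤ b * duhamelWeight C k r) (hc : 0 ≤ c)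
    (hyz : ∀ r ≤ s, ‖y r - z r‖ ≤ c * duhamelWeight C k r) :
    ‖duhamel A (fun r => f r (y r)) s - duhamel A (fun r => f r (z r)) s‖ ≤
      c / 2 * duhamelWeight C k s := by
  have hC₀ := nonneg_of_norm_exp_smul_le hC
  rw [← duhamel_sub hC (hf.integrableOn_comp hC₀ hyc hy) (hf.integrableOn_comp hC₀ hzc hz)]
  refine norm_duhamel_le_duhamelWeight hC hf.rate hc fun r hr => ?_
  calc ‖f r (y r) - f r (z r)‖ ≤ k r * ‖y r - z r‖ := hf.norm_apply_sub_le _ _ _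
    _ ≤ k r * (c * duhamelWeight C k r) := mul_le_mul_of_nonneg_left (hyz r hr) (hf.rate.nonneg r)
    _ = c * (k r * duhamelWeight C k r) := by ring

theorem hasDerivAt_duhamel_comp (hf : HasIntegrableLipschitzBound f k)
    (hC : ∀ t : ℝ, 0 ≤ t → ‖exp (t • A)‖ ≤ C) {y : ℝ → E} {c : ℝ} (hyc : Continuous y)
    (hy : ∀ s, ‖y s‖ ≤ c * duhamelWeight C k s) (s : ℝ) :
    HasDerivAt (duhamel A fun r => f r (y r))
      (A (duhamel A (fun r => f r (y r)) s) + f s (y s)) s :=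
  hasDerivAt_duhamel hC (hf.continuous.comp (continuous_id.prodMk hyc))
    (fun _ => hf.integrableOn_comp (nonneg_of_norm_exp_smul_le hC) hyc.continuousOn
      fun r _ => hy r) s

theorem exists_weight_smul_eq_duhamel (hf : HasIntegrableLipschitzBound f k)
    (hC : ∀ t : ℝ, 0 ≤ t → ‖exp (t • A)‖ ≤ C) (u : BoundedContinuousFunction ℝ E) :
    ∃ v : BoundedContinuousFunction ℝ E, ∀ s,
      duhamelWeight C k s • v s = duhamel A (fun r => f r (duhamelWeight C k r • u r)) s := by
  have hC₀ := nonneg_of_norm_exp_smul_le hC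
  have hW : Continuous (duhamelWeight C k) := (hf.isIntegrableRate_weight hC₀).continuous_expWeight
  have hW₀ (s : ℝ) : 0 < duhamelWeight C k s := expWeight_pos _ s
  have continuous_image : Continuous (duhamel A fun r => f r (duhamelWeight C k r • u r)) :=
    continuous_iff_continuousAt.2 fun s => (hf.hasDerivAt_duhamel_comp hC (hW.smul u.continuous)
      (norm_expWeight_smul_le u) s).continuousAt
  refine ⟨.ofNormedAddCommGroup
    (fun s => (duhamelWeight C k s)⁻¹ • duhamel A (fun r => f r (duhamelWeight C k r • u r)) s)
    ((hW.inv₀ fun s => (hW₀ s).ne').smul continuous_image) ((1 + ‖u‖) / 2) fun s => ?_,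
    fun s => smul_inv_smul₀ (hW₀ s).ne' _⟩
  rw [norm_smul, norm_inv, Real.norm_of_nonneg (hW₀ s).le, inv_mul_le_iff₀' (hW₀ s)]
  exact norm_duhamel_le_duhamelWeight hC hf.rate (by positivity)
    fun r _ => hf.norm_apply_le_of_norm_le hC₀ (norm_expWeight_smul_le u r)

theorem exists_eq_duhamel (hf : HasIntegrableLipschitzBound f k)
    (hC : ∀ t : ℝ, 0 ≤ t → ‖exp (t • A)‖ ≤ C) :
    ∃ y : ℝ → E, Continuous y ∧ (∃ c, ∀ s, ‖y s‖ ≤ c * duhamelWeight C k s) ∧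
      ∀ s, y s = duhamel A (fun r => f r (y r)) s := by
  have hW : Continuous (duhamelWeight C k) :=
    (hf.isIntegrableRate_weight (nonneg_of_norm_exp_smul_le hC)).continuous_expWeight
  have hW₀ (s : ℝ) : 0 < duhamelWeight C k s := expWeight_pos _ s
  choose picard hpicard using hf.exists_weight_smul_eq_duhamel hC
  have contracting : ContractingWith (1 / 2) picard := by
    refine ⟨by norm_num, LipschitzWith.of_dist_le_mul fun u v => ?_⟩
    refine (BoundedContinuousFunction.dist_le (by positivity)).2 fun s => ?_
    have weighted_bound : ‖duhamelWeight C k s • picard u s - duhamelWeight C k s • picard v s‖ ≤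
        dist u v / 2 * duhamelWeight C k s := by
      rw [hpicard, hpicard]
      refine hf.norm_duhamel_sub_duhamel_le hC (hW.smul u.continuous).continuousOn
        (fun r _ => norm_expWeight_smul_le u r) (hW.smul v.continuous).continuousOn
        (fun r _ => norm_expWeight_smul_le v r) dist_nonneg fun r _ => ?_
      rw [← smul_sub, dist_eq_norm]
      exact norm_expWeight_smul_le (u - v) r
    rw [← smul_sub, norm_smul, Real.norm_of_nonneg (hW₀ s).le, mul_comm] at weighted_bound
    simpa [dist_eq_norm, div_eq_inv_mul] using le_of_mul_le_mul_right weighted_bound (hW₀ s)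
  obtain ⟨u, fixed⟩ : ∃ u, picard u = u := ⟨_, contracting.fixedPoint_isFixedPt⟩
  refine ⟨fun s => duhamelWeight C k s • u s, hW.smul u.continuous,
    ⟨‖u‖, norm_expWeight_smul_le u⟩, fun s => ?_⟩
  rw [← hpicard, fixed]

theorem exists_hasDerivAt_tendsto_atBot (hf : HasIntegrableLipschitzBound f k)
    (hC : ∀ t : ℝ, 0 ≤ t → ‖exp (t • A)‖ ≤ C) :
    ∃ y : ℝ → E, (∀ s, HasDerivAt y (A (y s) + f s (y s)) s) ∧ Tendsto y atBot (𝓝 0) := by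
  obtain ⟨y, hyc, ⟨c, hy⟩, hfix⟩ := hf.exists_eq_duhamel hC
  refine ⟨y, fun s => ?_, ?_⟩
  · have := hf.hasDerivAt_duhamel_comp hC hyc hy s
    rwa [← hfix, ← funext hfix] at this
  · rw [funext hfix]
    exact tendsto_duhamel_atBot hC fun _ => hf.integrableOn_comp (nonneg_of_norm_exp_smul_le hC)
      hyc.continuousOn fun r _ => hy r

theorem eqOn_Iic_of_eq_duhamel (hf : HasIntegrableLipschitzBound f k)
    (hC : ∀ t : ℝ, 0 ≤ t → ‖exp (t • A)‖ ≤ C) {y z : ℝ → E} {a b c : ℝ}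
    (hyc : ContinuousOn y (Iic a)) (hyb : ∀ s ≤ a, ‖y s‖ ≤ b * duhamelWeight C k s)
    (hy : ∀ s ≤ a, y s = duhamel A (fun r => f r (y r)) s)
    (hzc : ContinuousOn z (Iic a)) (hzb : ∀ s ≤ a, ‖z s‖ ≤ c * duhamelWeight C k s)
    (hz : ∀ s ≤ a, z s = duhamel A (fun r => f r (z r)) s) : EqOn y z (Iic a) := by
  have difference (s : ℝ) (hs : s ≤ a) : ‖y s - z s‖ ≤ (b + c) * duhamelWeight C k s := by
    rw [add_mul]
    exact (norm_sub_le _ _).trans (add_le_add (hyb s hs) (hzb s hs))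
  have constant_nonneg : 0 ≤ b + c :=
    nonneg_of_mul_nonneg_left ((norm_nonneg _).trans (difference a le_rfl)) (expWeight_pos _ a)
  have halving (m : ℕ) : ∀ s ≤ a, ‖y s - z s‖ ≤ (b + c) / 2 ^ m * duhamelWeight C k s := by
    induction m with
    | zero => simpa only [pow_zero, div_one] using difference
    | succ m ih =>
      intro s hs
      have subset := Iic_subset_Iic.2 hs
      rw [hy s hs, hz s hs, pow_succ, ← div_div]
      exact hf.norm_duhamel_sub_duhamel_le hC (hyc.mono subset) (fun r hr => hyb r (hr.trans hs))
        (hzc.mono subset) (fun r hr => hzb r (hr.trans hs)) (by positivity)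
        fun r hr => ih r (hr.trans hs)
  intro s hs
  have lim : Tendsto (fun m : ℕ => (b + c) / 2 ^ m * duhamelWeight C k s) atTop (𝓝 0) := by
    simpa only [zero_mul] using ((tendsto_const_nhds (x := b + c)).div_atTop
      (tendsto_pow_atTop_atTop_of_one_lt one_lt_two)).mul_const (duhamelWeight C k s)
  exact sub_eq_zero.1 (norm_le_zero_iff.1 (ge_of_tendsto' lim fun m => halving m s hs))

theorem eqOn_Iic_of_hasDerivAt (hf : HasIntegrableLipschitzBound f k)
    (hC : ∀ t : ℝ, 0 ≤ t → ‖exp (t • A)‖ ≤ C) {y z : ℝ → E} {a : ℝ}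
    (hy : ∀ s ≤ a, HasDerivAt y (A (y s) + f s (y s)) s) (hy₀ : Tendsto y atBot (𝓝 0))
    (hz : ∀ s ≤ a, HasDerivAt z (A (z s) + f s (z s)) s) (hz₀ : Tendsto z atBot (𝓝 0)) :
    EqOn y z (Iic a) := by
  have hC₀ := nonneg_of_norm_exp_smul_le hC
  have eq_duhamel {w : ℝ → E} (hw : ∀ s ≤ a, HasDerivAt w (A (w s) + f s (w s)) s)
      (hw₀ : Tendsto w atBot (𝓝 0)) : ContinuousOn w (Iic a) ∧
        (∃ c, ∀ s ≤ a, ‖w s‖ ≤ c * duhamelWeight C k s) ∧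
        ∀ s ≤ a, w s = duhamel A (fun r => f r (w r)) s := by
    have hwc : ContinuousOn w (Iic a) := fun s hs => (hw s hs).continuousAt.continuousWithinAt
    obtain ⟨c, hc⟩ := (hf.isIntegrableRate_weight hC₀).exists_norm_le_mul_expWeight hwc hw₀
    refine ⟨hwc, ⟨c, hc⟩, fun s hs => ?_⟩
    exact eq_duhamel_of_hasDerivAt hC (fun r hr => hw r (hr.trans hs)) hw₀
      (hf.integrableOn_comp hC₀ (hwc.mono (Iic_subset_Iic.2 hs)) fun r hr => hc r (hr.trans hs))
  obtain ⟨hyc, ⟨b, hyb⟩, hyd⟩ := eq_duhamel hy hy₀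
  obtain ⟨hzc, ⟨c, hzb⟩, hzd⟩ := eq_duhamel hz hz₀
  exact hf.eqOn_Iic_of_eq_duhamel hC hyc hyb hyd hzc hzb hzd

end HasIntegrableLipschitzBound

end HalfLineODE

section Fuchsian

variable {E : Type*} [NormedAddCommGroup E] [NormedSpace ℝ E] {A : E →L[ℝ] E} {F : ℝ → E → E}
  {Φ : ℝ → E} {ε T : ℝ}

/-- `Φ` is continuous on `(0, T]`, solves the Fuchsian system `t Φ' + A Φ = t ^ ε F(t, Φ)` there,
and tends to `0` at the singular time `0`. -/
def IsFuchsianSolution (A : E →L[ℝ] E) (F : ℝ → E → E) (ε T : ℝ) (Φ : ℝ → E) : Prop :=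
  ContinuousOn Φ (Ioc 0 T) ∧
    (∀ t ∈ Ioc (0 : ℝ) T, DifferentiableAt ℝ Φ t ∧
      t • deriv Φ t + A (Φ t) = t ^ ε • F t (Φ t)) ∧
    Tendsto Φ (𝓝[>] 0) (𝓝 0)

/-- The nonlinearity `t ^ ε F(t, x)` in the logarithmic time `t = e^s`, extended beyond
`s = log T` by freezing the time argument of `F` at `T`. -/
noncomputable def logField (F : ℝ → E → E) (ε T s : ℝ) (x : E) : E :=
  Real.exp (ε * s) • F (min (Real.exp s) T) x

theorem logField_of_exp_le {s : ℝ} (hs : Real.exp s ≤ T) (x : E) :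
    logField F ε T s x = Real.exp s ^ ε • F (Real.exp s) x := by
  rw [logField, min_eq_left hs, ← Real.exp_mul, mul_comm]

theorem isIntegrableRate_exp_mul (hε : 0 < ε) : IsIntegrableRate fun s => Real.exp (ε * s) where
  nonneg _ := (Real.exp_pos _).le
  continuous := by fun_prop
  integrableOn := integrableOn_exp_mul_Iic hε

theorem hasIntegrableLipschitzBound_logField (hε : 0 < ε) (hT : 0 < T)
    (hF : ContinuousOn (fun p : ℝ × E => F p.1 p.2) (Ioc 0 T ×ˢ univ)) {B : ℝ}
    (hB : ∀ t ∈ Ioc 0 T, ‖F t 0‖ ≤ B) {L : NNReal} (hL : ∀ t ∈ Ioc 0 T, LipschitzWith L (F t)) :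
    HasIntegrableLipschitzBound (logField F ε T) fun s => max B L * Real.exp (ε * s) := by
  have mem (s : ℝ) : min (Real.exp s) T ∈ Ioc 0 T :=
    ⟨lt_min (Real.exp_pos s) hT, min_le_right _ _⟩
  refine ⟨?_, (isIntegrableRate_exp_mul hε).const_mul (le_max_of_le_right L.coe_nonneg),
    fun s => ?_, fun s x y => ?_⟩
  · have : Continuous fun p : ℝ × E => F (min (Real.exp p.1) T) p.2 :=
      hF.comp_continuous (f := fun p : ℝ × E => (min (Real.exp p.1) T, p.2)) (by fun_prop)
        fun p => ⟨mem p.1, mem_univ _⟩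
    exact (by fun_prop : Continuous fun p : ℝ × E => Real.exp (ε * p.1)).smul this
  · rw [logField, norm_smul, Real.norm_of_nonneg (Real.exp_pos _).le, mul_comm]
    gcongr
    exact (hB _ (mem s)).trans (le_max_left _ _)
  · rw [logField, logField, ← smul_sub, norm_smul, Real.norm_of_nonneg (Real.exp_pos _).le,
      mul_comm (max _ _), mul_assoc]
    gcongr
    exact ((hL _ (mem s)).norm_sub_le x y).trans (by gcongr; exact le_max_right _ _)

namespace IsFuchsianSolution

theorem hasDerivAt_comp_exp (hΦ : IsFuchsianSolution A F ε T Φ) {s : ℝ} (hs : Real.exp s ≤ T) :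
    HasDerivAt (fun s => Φ (Real.exp s))
      ((-A) (Φ (Real.exp s)) + logField F ε T s (Φ (Real.exp s))) s := by
  obtain ⟨differentiable, equation⟩ := hΦ.2.1 (Real.exp s) ⟨Real.exp_pos s, hs⟩
  rw [logField_of_exp_le hs, ← equation, _root_.neg_apply, neg_add_cancel_comm_assoc]
  exact differentiable.hasDerivAt.scomp s (Real.hasDerivAt_exp s)

theorem tendsto_comp_exp (hΦ : IsFuchsianSolution A F ε T Φ) :
    Tendsto (fun s => Φ (Real.exp s)) atBot (𝓝 0) :=
  hΦ.2.2.comp Real.tendsto_exp_atBot_nhdsGT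

theorem of_log {y : ℝ → E}
    (hy : ∀ s, Real.exp s ≤ T → HasDerivAt y ((-A) (y s) + logField F ε T s (y s)) s)
    (hlim : Tendsto y atBot (𝓝 0)) : IsFuchsianSolution A F ε T fun t => y (Real.log t) := by
  have deriv (t : ℝ) (ht : t ∈ Ioc 0 T) : HasDerivAt (fun t => y (Real.log t))
      (t⁻¹ • (-A (y (Real.log t)) + t ^ ε • F t (y (Real.log t)))) t := by
    have exp_log := Real.exp_log ht.1
    have := hy (Real.log t) (exp_log.trans_le ht.2)
    rw [logField_of_exp_le (exp_log.trans_le ht.2), exp_log] at this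
    exact this.scomp t (Real.hasDerivAt_log ht.1.ne')
  refine ⟨fun t ht => (deriv t ht).continuousAt.continuousWithinAt,
    fun t ht => ⟨(deriv t ht).differentiableAt, ?_⟩, hlim.comp Real.tendsto_log_nhdsGT_zero⟩
  rw [(deriv t ht).deriv, smul_inv_smul₀ ht.1.ne', neg_add_cancel_comm]

end IsFuchsianSolution

theorem fuchsian_ode_exists_unique_general [CompleteSpace E] (hε : 0 < ε) (hT : 0 < T)
    (hA : ∃ C, ∀ t : ℝ, 0 ≤ t → ‖exp (t • -A)‖ ≤ C)
    (hF : ContinuousOn (fun p : ℝ × E => F p.1 p.2) (Ioc 0 T ×ˢ univ))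
    (hB : ∃ B, ∀ t ∈ Ioc 0 T, ‖F t 0‖ ≤ B)
    (hL : ∃ L : NNReal, ∀ t ∈ Ioc 0 T, LipschitzWith L (F t)) :
    ∃ Φ, IsFuchsianSolution A F ε T Φ ∧
      ∀ Ψ, IsFuchsianSolution A F ε T Ψ → EqOn Ψ Φ (Ioc 0 T) := by
  obtain ⟨C, hC⟩ := hA
  obtain ⟨B, hB⟩ := hB
  obtain ⟨L, hL⟩ := hL
  have field_bound := hasIntegrableLipschitzBound_logField hε hT hF hB hL
  obtain ⟨y, hy, hlim⟩ := field_bound.exists_hasDerivAt_tendsto_atBot hC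
  refine ⟨fun t => y (Real.log t), .of_log (fun s _ => hy s) hlim, fun Ψ hΨ t ht => ?_⟩
  have eqOn_log := field_bound.eqOn_Iic_of_hasDerivAt hC
    (fun s hs => hΨ.hasDerivAt_comp_exp ((Real.le_log_iff_exp_le hT).1 hs)) hΨ.tendsto_comp_exp
    (fun s _ => hy s) hlim (Real.log_le_log ht.1 ht.2)
  simpa only [Real.exp_log ht.1] using eqOn_log

end Fuchsian

section Dissipative

variable {E H : Type*} [NormedAddCommGroup E] [NormedSpace ℝ E] [CompleteSpace E]
  [NormedAddCommGroup H] [InnerProductSpace ℝ H] {A : E →L[ℝ] E}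

theorem norm_map_exp_smul_apply_le_of_inner_nonpos (e : E →L[ℝ] H)
    (hA : ∀ x, inner ℝ (e x) (e (A x)) ≤ 0) {t : ℝ} (ht : 0 ≤ t) (x : E) :
    ‖e (exp (t • A) x)‖ ≤ ‖e x‖ := by
  have energy_deriv (s : ℝ) : HasDerivAt (fun s : ℝ => ‖e (exp (s • A) x)‖ ^ 2)
      (2 * inner ℝ (e (exp (s • A) x)) (e (A (exp (s • A) x)))) s := by
    have orbit_deriv : HasDerivAt (fun s : ℝ => exp (s • A) x) (A (exp (s • A) x)) s := by
      simpa using (hasDerivAt_exp_smul_const' A s).clm_apply (hasDerivAt_const s x)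
    exact (e.hasFDerivAt.comp_hasDerivAt s orbit_deriv).norm_sq
  have energy_antitone := antitone_of_hasDerivAt_nonpos energy_deriv fun s =>
    mul_nonpos_of_nonneg_of_nonpos zero_le_two (hA _)
  have := energy_antitone ht
  simp only [zero_smul, exp_zero, one_apply_eq_self] at this
  exact (sq_le_sq₀ (norm_nonneg _) (norm_nonneg _)).1 this

theorem norm_exp_smul_le_of_inner_nonpos (e : E ≃L[ℝ] H)
    (hA : ∀ x, inner ℝ (e x) (e (A x)) ≤ 0) {t : ℝ} (ht : 0 ≤ t) :
    ‖exp (t • A)‖ ≤ ‖(e.symm : H →L[ℝ] E)‖ * ‖(e : E →L[ℝ] H)‖ := by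
  refine ContinuousLinearMap.opNorm_le_bound _ (by positivity) fun x => ?_
  calc ‖exp (t • A) x‖ = ‖e.symm (e (exp (t • A) x))‖ := by rw [e.symm_apply_apply]
    _ ≤ ‖(e.symm : H →L[ℝ] E)‖ * ‖e (exp (t • A) x)‖ :=
        (e.symm : H →L[ℝ] E).le_opNorm _
    _ ≤ ‖(e.symm : H →L[ℝ] E)‖ * (‖(e : E →L[ℝ] H)‖ * ‖x‖) := by
        gcongr
        exact (norm_map_exp_smul_apply_le_of_inner_nonpos (e : E →L[ℝ] H) hA ht x).trans
          ((e : E →L[ℝ] H).le_opNorm x)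
    _ = ‖(e.symm : H →L[ℝ] E)‖ * ‖(e : E →L[ℝ] H)‖ * ‖x‖ := (mul_assoc _ _ _).symm

theorem exists_norm_exp_smul_neg_mulVecLin_le {ι : Type*} [Fintype ι] {M : Matrix ι ι ℝ}
    (hM : ∀ x : ι → ℝ, 0 ≤ x ⬝ᵥ M *ᵥ x) :
    ∃ C, ∀ t : ℝ, 0 ≤ t → ‖exp (t • -M.mulVecLin.toContinuousLinearMap)‖ ≤ C := by
  let e := (PiLp.continuousLinearEquiv 2 ℝ fun _ : ι => ℝ).symm
  refine ⟨_, fun t ht => norm_exp_smul_le_of_inner_nonpos e (fun x => ?_) ht⟩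
  have : inner ℝ (e x) (e (M *ᵥ x)) = x ⬝ᵥ M *ᵥ x := by
    rw [EuclideanSpace.inner_eq_star_dotProduct, star_trivial, dotProduct_comm]
    rfl
  simpa [this] using hM x

end Dissipative

end FuchsianODE

/-- Finite-dimensional model Fuchsian theorem: the singular system
`t Φ'(t) + M Φ(t) = t^ε F(t, Φ(t))` on `(0,T]`, with `M` positive definite and `F`
continuous, bounded, and uniformly Lipschitz in its second argument, has exactly one
solution tending to `0` as `t → 0⁺`. -/
theorem fuchsian_ode_exists_unique
    (n : ℕ) (hn : 1 ≤ n) (T ε : ℝ) (hT : 0 < T) (hε : 0 < ε)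
    (M : Matrix (Fin n) (Fin n) ℝ)
    (hM : ∃ lam : ℝ, 0 < lam ∧ ∀ x : Fin n → ℝ,
      lam * (x ⬝ᵥ x) ≤ x ⬝ᵥ M.mulVec x)
    (F : ℝ → (Fin n → ℝ) → (Fin n → ℝ))
    (hFcont : ContinuousOn (fun p : ℝ × (Fin n → ℝ) => F p.1 p.2)
      (Set.Icc 0 T ×ˢ Set.univ))
    (hFbdd : ∃ B : ℝ, ∀ t ∈ Set.Icc (0:ℝ) T, ∀ x : Fin n → ℝ, ‖F t x‖ ≤ B)
    (hFlip : ∃ L : NNReal, ∀ t ∈ Set.Icc (0:ℝ) T, LipschitzWith L (F t)) :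
    ∃ Φ : ℝ → (Fin n → ℝ),
      (ContinuousOn Φ (Set.Ioc 0 T) ∧
        (∀ t ∈ Set.Ioc (0:ℝ) T, DifferentiableAt ℝ Φ t ∧
          t • deriv Φ t + M.mulVec (Φ t) = t ^ ε • F t (Φ t)) ∧
        Tendsto Φ (nhdsWithin 0 (Set.Ioi 0)) (nhds 0)) ∧
      ∀ Ψ : ℝ → (Fin n → ℝ),
        (ContinuousOn Ψ (Set.Ioc 0 T) ∧
          (∀ t ∈ Set.Ioc (0:ℝ) T, DifferentiableAt ℝ Ψ t ∧
            t • deriv Ψ t + M.mulVec (Ψ t) = t ^ ε • F t (Ψ t)) ∧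
          Tendsto Ψ (nhdsWithin 0 (Set.Ioi 0)) (nhds 0)) →
        Set.EqOn Ψ Φ (Set.Ioc 0 T) := by
  obtain ⟨lam, hlam, hM⟩ := hM
  have semigroup_bounded := exists_norm_exp_smul_neg_mulVecLin_le fun x =>
    (mul_nonneg hlam.le (Finset.sum_nonneg fun i _ => mul_self_nonneg (x i))).trans (hM x)
  exact fuchsian_ode_exists_unique_general hε hT semigroup_bounded
    (hFcont.mono (Set.prod_mono_left Set.Ioc_subset_Icc_self))
    (hFbdd.imp fun _ hB t ht => hB t (Set.Ioc_subset_Icc_self ht) 0)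
    (hFlip.imp fun _ hL t ht => hL t (Set.Ioc_subset_Icc_self ht))
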